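/- Let (G,T) be a bipartite graft, r ∈ V(G), and F a minimum join of (G,T). Let K be a decapital distance component of (G,T) with respect to r, with root fragment S̃_K and antiroot class T_K, and let S ∈ 𝒜(K). Then: (i) if S ≠ S̃_K, then dist_F(s, x) = 1 for every s ∈ S and every vertex x ∉ V(K) adjacent to a vertex of S, and consequently V(G)\V(K) is disjoint from the maximum F-negative set for S; (ii) if S = S̃_K, then dist_F(s, x) = 1 for every s ∈ S and every vertex x ∉ V(K) ∪ T_K adjacent to a vertex of S, and consequently V(G)\V(K) is disjoint from the maximum F-negative set for S avoiding T_K. -/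

import Mathlib

/-!
Write `d u v = ν(G, T ∆ {u} ∆ {v}) - ν(G, T)`. A minimum join `F` and a minimum join for
`T ∆ {u} ∆ {v}` differ by an edge set containing a path from `u` to `v`, which shows that the
`F`-distance of `u` and `v` is `d u v`; in particular it does not depend on `F`. The values of `d`
at the two ends of an edge differ by exactly one, since `G` is bipartite, and an edge `uv` is
allowed if and only if `d u v = -1`.

Joins for two terminal sets can be exchanged along a path contained in their symmetric difference.
Applied to minimum joins this gives a four-point inequality for `d` (`four_point`): along an edge
`pq`, the difference `d x · - d t ·` does not increase from `p` to `q` unless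
`d x t - 1 ≤ d x p + d t q`. Three consequences carry the proof:

* `d ≤ 0` inside a factor-component (`dnu_nonpos`);
* equivalent vertices `u ∼ v` have the same distance to every other vertex (`dnu_eq_of_klRel`);
* if `K` is a distance component at level `i` and `t ∈ A(K)`, then `d r z - i ≤ d t z` for every
  `z ∈ K` (`sub_le_dnu`), so that two vertices of `A(K)` are at nonnegative distance.

Hence a class other than the root class that meets `A(K)` cannot leave `K`: a walk of allowed edges
leaves `K` through a vertex of the root class in `A(K)`, which is at distance `0` from the starting
point and so equivalent to it. An edge from `S` to a vertex `x` outside `K` (and outside `T_K`, for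
the root fragment) is therefore not allowed, so `x` is at distance `1` from the adjacent vertex of
`S`, and from all of `S` by equivalence.

Finally, let a vertex outside `K` have a negative path to `S` inside a negative set `X`. The path
enters `K` along an edge `wa` with `w ∉ K` and `a ∈ A(K)`. If `a ∈ S`, then `w ∈ X` is at
distance `1` from all of `S`; if `a ∉ S`, then `a ∈ X` is at nonnegative distance from all of
`S ⊆ A(K)`. Either way no negative path to `S` starts at this vertex of `X`.
-/

namespace TightCuts

open SimpleGraph

variable {V : Type*}

/-- `(G, T)` is a graft: every connected component of `G` contains an even
number of vertices of `T`. -/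
def IsGraft (G : SimpleGraph V) (T : Set V) : Prop :=
  ∀ c : G.ConnectedComponent, Even ((T ∩ {v | G.connectedComponentMk v = c}).ncard)

/-- `F` is a join of the graft `(G, T)`: a set of edges such that a vertex is
incident with an odd number of edges of `F` exactly when it lies in `T`. -/
def IsJoin (G : SimpleGraph V) (T : Set V) (F : Set (Sym2 V)) : Prop :=
  F ⊆ G.edgeSet ∧ ∀ v : V, (Odd ({e ∈ F | v ∈ e}).ncard ↔ v ∈ T)

/-- `ν(G, T)`: the minimum size of a join of `(G, T)`. -/
noncomputable def nu (G : SimpleGraph V) (T : Set V) : ℕ :=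
  sInf {n | ∃ F : Set (Sym2 V), IsJoin G T F ∧ F.ncard = n}

/-- `F` is a minimum join of `(G, T)`. -/
def IsMinJoin (G : SimpleGraph V) (T : Set V) (F : Set (Sym2 V)) : Prop :=
  IsJoin G T F ∧ F.ncard = nu G T

open Classical in
/-- The `F`-weight of an edge: `-1` if the edge lies in `F`, `+1` otherwise. -/
noncomputable def edgeWt (F : Set (Sym2 V)) (e : Sym2 V) : ℤ :=
  if e ∈ F then -1 else 1

/-- The `F`-weight of a walk: the sum of the `F`-weights of its edges. -/
noncomputable def walkWt (F : Set (Sym2 V)) {G : SimpleGraph V} {x y : V}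
    (p : G.Walk x y) : ℤ :=
  (p.edges.map (edgeWt F)).sum

/-- The `F`-distance between `x` and `y`: the minimum `F`-weight of a path
between `x` and `y`. -/
noncomputable def distF (G : SimpleGraph V) (F : Set (Sym2 V)) (x y : V) : ℤ :=
  sInf {n : ℤ | ∃ p : G.Walk x y, p.IsPath ∧ walkWt F p = n}

/-- `K` is (the vertex set of) a connected component of the subgraph of `G`
induced by `U`. -/
def IsComponentOf (G : SimpleGraph V) (U K : Set V) : Prop :=
  K.Nonempty ∧ K ⊆ U ∧ (G.induce K).Connected ∧
    ∀ x ∈ K, ∀ y ∈ U, G.Adj x y → y ∈ K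

/-- `K` is a distance component of the graft with respect to root `r` at level `i`
(with respect to a minimum join `F`): `i` is attained as an `F`-distance from `r`,
and `K` is a connected component of the subgraph induced by the vertices at
`F`-distance at most `i` from `r`. -/
def IsDistCompAt (G : SimpleGraph V) (F : Set (Sym2 V)) (r : V) (i : ℤ) (K : Set V) : Prop :=
  (∃ x, distF G F r x = i) ∧ IsComponentOf G {x | distF G F r x ≤ i} K

/-- `K` is a decapital distance component with respect to root `r`: a distance
component (at some level) not containing `r`. -/
def IsDecapDistComp (G : SimpleGraph V) (F : Set (Sym2 V)) (r : V) (K : Set V) : Prop :=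
  ∃ i : ℤ, IsDistCompAt G F r i K ∧ r ∉ K

/-- The edge cut `δ_G(K)`: edges of `G` with exactly one end in `K`. -/
def cutEdges (G : SimpleGraph V) (K : Set V) : Set (Sym2 V) :=
  {e | e ∈ G.edgeSet ∧ ∃ x y, e = s(x, y) ∧ x ∈ K ∧ y ∉ K}

/-- An edge is allowed in `(G, T)` if some minimum join contains it. -/
def Allowed (G : SimpleGraph V) (T : Set V) (e : Sym2 V) : Prop :=
  ∃ F, IsMinJoin G T F ∧ e ∈ F

/-- Two vertices are factor-connected if there is a walk between them all of
whose edges are allowed. -/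
def FactorConnected (G : SimpleGraph V) (T : Set V) (u v : V) : Prop :=
  ∃ p : G.Walk u v, ∀ e ∈ p.edges, Allowed G T e

/-- `C` is (the vertex set of) a factor-component of `(G, T)`: an equivalence
class of factor-connectivity. -/
def IsFactorComponent (G : SimpleGraph V) (T : Set V) (C : Set V) : Prop :=
  ∃ v, C = {u | FactorConnected G T u v}

/-- The Kotzig–Lovász relation: `u ∼ v` iff `u = v`, or `u` and `v` are
factor-connected (hence in the same factor-component) and
`ν(G, T) = ν(G, T Δ {u, v})`. -/
def klRel (G : SimpleGraph V) (T : Set V) (u v : V) : Prop :=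
  u = v ∨ (FactorConnected G T u v ∧ nu G T = nu G (symmDiff T {u, v}))

/-- `S` is a Kotzig–Lovász class of `(G, T)`. -/
def IsKLClass (G : SimpleGraph V) (T : Set V) (S : Set V) : Prop :=
  ∃ v, S = {u | klRel G T u v}

/-- `A(K)` for a distance component `K` at level `i`: the vertices of `K` at
`F`-distance exactly `i` from `r`. -/
def AK (G : SimpleGraph V) (F : Set (Sym2 V)) (r : V) (i : ℤ) (K : Set V) : Set V :=
  K ∩ {x | distF G F r x = i}

/-- `D(K) = V(K) \ A(K)`. -/
def DK (G : SimpleGraph V) (F : Set (Sym2 V)) (r : V) (i : ℤ) (K : Set V) : Set V :=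
  K \ AK G F r i K

/-- `S` is the root class of `K`: a Kotzig–Lovász class containing all ends in
`K` of allowed edges of the cut `δ_G(K)`. -/
def IsRootClass (G : SimpleGraph V) (T : Set V) (K S : Set V) : Prop :=
  IsKLClass G T S ∧ ∀ e ∈ cutEdges G K, Allowed G T e → ∀ u ∈ e, u ∈ K → u ∈ S

/-- `S` is the antiroot class of `K`: a Kotzig–Lovász class containing all ends
outside `K` of allowed edges of the cut `δ_G(K)`. -/
def IsAntirootClass (G : SimpleGraph V) (T : Set V) (K S : Set V) : Prop :=
  IsKLClass G T S ∧ ∀ e ∈ cutEdges G K, Allowed G T e → ∀ u ∈ e, u ∉ K → u ∈ S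

/-- The family `𝒜(K)`: the root fragment `K ∩ S_K` together with all
Kotzig–Lovász classes other than `S_K` that contain a vertex of `A(K)`. -/
def famA (G : SimpleGraph V) (T : Set V) (F : Set (Sym2 V)) (r : V) (i : ℤ)
    (K S_K : Set V) : Set (Set V) :=
  insert (K ∩ S_K) {S | IsKLClass G T S ∧ S ≠ S_K ∧ (S ∩ AK G F r i K).Nonempty}

/-- `L` is adjacent to a vertex of `S` by an allowed edge. -/
def AdjAllowed (G : SimpleGraph V) (T : Set V) (L S : Set V) : Prop :=
  ∃ x ∈ L, ∃ s ∈ S, G.Adj x s ∧ Allowed G T s(x, s)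

/-- `𝒩_K(S)`: the family of connected components of `G[D(K)]` adjacent to a
vertex of `S` by an allowed edge. -/
def NKfam (G : SimpleGraph V) (T : Set V) (F : Set (Sym2 V)) (r : V) (i : ℤ)
    (K S : Set V) : Set (Set V) :=
  {L | IsComponentOf G (DK G F r i K) L ∧ AdjAllowed G T L S}

/-- `U_K(S)`: the union of the vertex sets of the members of `𝒩_K(S)`. -/
def UK (G : SimpleGraph V) (T : Set V) (F : Set (Sym2 V)) (r : V) (i : ℤ)
    (K S : Set V) : Set V :=
  ⋃₀ NKfam G T F r i K S

/-- `X` is an `F`-negative set for `S`: `X` is disjoint from `S` and every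
`x ∈ X` admits a path of negative `F`-weight from `x` to a vertex of `S` whose
vertices, except the end in `S`, all lie in `X`. -/
def IsNegSet (G : SimpleGraph V) (F : Set (Sym2 V)) (S X : Set V) : Prop :=
  X ⊆ Sᶜ ∧ ∀ x ∈ X, ∃ y ∈ S, ∃ p : G.Walk x y, p.IsPath ∧ walkWt F p < 0 ∧
    ∀ v ∈ p.support, v ≠ y → v ∈ X

/-- The maximum `F`-negative set for `S`: the union of all `F`-negative sets
for `S`. -/
def maxNegSet (G : SimpleGraph V) (F : Set (Sym2 V)) (S : Set V) : Set V :=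
  ⋃₀ {X | IsNegSet G F S X}

/-- The maximum `F`-negative set for `S` avoiding `Y`. -/
def maxNegSetAvoiding (G : SimpleGraph V) (F : Set (Sym2 V)) (S Y : Set V) : Set V :=
  ⋃₀ {X | IsNegSet G F S X ∧ Disjoint X Y}

/-! ### Parity of boundaries -/

lemma odd_ncard_symmDiff {α : Type*} [Finite α] (A B : Set α) :
    Odd (symmDiff A B).ncard ↔ ¬ (Odd A.ncard ↔ Odd B.ncard) := by
  have h1 : (symmDiff A B).ncard = (A \ B).ncard + (B \ A).ncard := by
    rw [Set.symmDiff_def]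
    exact Set.ncard_union_eq (Set.disjoint_left.2 fun x hx hx' => hx'.2 hx.1)
      (Set.toFinite _) (Set.toFinite _)
  have h2 := Set.ncard_inter_add_ncard_sdiff_eq_ncard A B (Set.toFinite _)
  have h3 := Set.ncard_inter_add_ncard_sdiff_eq_ncard B A (Set.toFinite _)
  rw [Set.inter_comm] at h3
  simp only [Nat.odd_iff]
  omega

/-- The boundary of a set `M` of edges: the vertices incident with an odd number of its edges. -/
def bd (M : Set (Sym2 V)) : Set V := {v | Odd ({e ∈ M | v ∈ e}).ncard}

lemma mem_bd {M : Set (Sym2 V)} {v : V} : v ∈ bd M ↔ Odd ({e ∈ M | v ∈ e}).ncard := Iff.rfl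

lemma isJoin_iff {G : SimpleGraph V} {T : Set V} {M : Set (Sym2 V)} :
    IsJoin G T M ↔ M ⊆ G.edgeSet ∧ bd M = T := by
  simp only [IsJoin, bd, Set.ext_iff, Set.mem_ofPred_eq]

lemma bd_symmDiff [Finite V] (M N : Set (Sym2 V)) :
    bd (symmDiff M N) = symmDiff (bd M) (bd N) := by
  ext v
  have h : {e ∈ symmDiff M N | v ∈ e} = symmDiff {e ∈ M | v ∈ e} {e ∈ N | v ∈ e} := by
    ext e; simp only [Set.mem_symmDiff, Set.mem_ofPred_eq]; tauto
  rw [Set.mem_symmDiff, mem_bd, mem_bd, mem_bd, h, odd_ncard_symmDiff]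
  tauto

lemma bd_edge {x y : V} (hxy : x ≠ y) : bd {s(x, y)} = symmDiff {x} {y} := by
  ext v
  by_cases hv : v = x ∨ v = y
  · have h : {e ∈ ({s(x, y)} : Set (Sym2 V)) | v ∈ e} = {s(x, y)} := by
      ext e
      simp only [Set.mem_ofPred_eq, Set.mem_singleton_iff]
      exact ⟨fun h => h.1, fun h => ⟨h, by rw [h]; exact Sym2.mem_iff.2 hv⟩⟩
    rw [mem_bd, h, Set.ncard_singleton, Set.mem_symmDiff, Set.mem_singleton_iff,
      Set.mem_singleton_iff]
    rcases hv with rfl | rfl <;> simp [hxy, hxy.symm]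
  · have h : {e ∈ ({s(x, y)} : Set (Sym2 V)) | v ∈ e} = ∅ := by
      ext e
      simp only [Set.mem_ofPred_eq, Set.mem_singleton_iff, Set.mem_empty_iff_false, iff_false,
        not_and]
      rintro rfl h
      exact hv (Sym2.mem_iff.1 h)
    rw [mem_bd, h, Set.ncard_empty, Set.mem_symmDiff, Set.mem_singleton_iff,
      Set.mem_singleton_iff]
    have : ¬ Odd 0 := by decide
    tauto

lemma bd_empty : bd (∅ : Set (Sym2 V)) = ∅ := by
  ext v; simp [bd]

/-- In a bipartite graph every edge has exactly one end of each colour, so the size of an edge set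
has the same parity as the number of boundary vertices of a fixed colour. -/
lemma odd_ncard_iff_bd [Finite V] {G : SimpleGraph V} (C : G.Coloring (Fin 2))
    (M : Set (Sym2 V)) (hM : M ⊆ G.edgeSet) :
    Odd M.ncard ↔ Odd (bd M ∩ {v | C v = 0}).ncard := by
  induction M, Set.toFinite M using Set.Finite.induction_on with
  | empty => simp [bd_empty]
  | @insert e M he _ ih =>
    have hM' : M ⊆ G.edgeSet := fun x hx => hM (Set.mem_insert_of_mem _ hx)
    have ha : e ∈ G.edgeSet := hM (Set.mem_insert _ _)
    have key : insert e M = symmDiff M {e} := by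
      ext x; simp only [Set.mem_insert_iff, Set.mem_symmDiff, Set.mem_singleton_iff]
      constructor
      · rintro (rfl | h)
        · exact Or.inr ⟨rfl, he⟩
        · exact Or.inl ⟨h, fun h' => he (h' ▸ h)⟩
      · tauto
    rw [key, bd_symmDiff, odd_ncard_symmDiff, ih hM', Set.ncard_singleton,
      Set.inter_symmDiff_distrib_right, odd_ncard_symmDiff]
    have : (bd {e} ∩ {v | C v = 0}).ncard = 1 := by
      induction e with
      | _ a b =>
      have hab : G.Adj a b := ha
      have hc := C.valid hab
      rw [bd_edge hab.ne, Set.ncard_eq_one]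
      by_cases h0 : C a = 0
      · refine ⟨a, ?_⟩
        ext v
        simp only [Set.mem_inter_iff, Set.mem_symmDiff, Set.mem_singleton_iff, Set.mem_ofPred_eq]
        constructor
        · rintro ⟨h | h, h'⟩
          · exact h.1
          · rw [h.1] at h'; exact absurd (h0.trans h'.symm) hc
        · rintro rfl; exact ⟨Or.inl ⟨rfl, hab.ne⟩, h0⟩
      · have h1 : C b = 0 := by
          revert h0 hc; generalize C a = p; generalize C b = q; revert p q; decide
        refine ⟨b, ?_⟩
        ext v
        simp only [Set.mem_inter_iff, Set.mem_symmDiff, Set.mem_singleton_iff, Set.mem_ofPred_eq]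
        constructor
        · rintro ⟨h | h, h'⟩
          · rw [h.1] at h'; exact absurd h' h0
          · exact h.1
        · rintro rfl; exact ⟨Or.inr ⟨rfl, hab.ne'⟩, h1⟩
    rw [this]

/-! ### Symmetric differences of joins and the exchange property -/

lemma IsJoin.symmDiff [Finite V] {G : SimpleGraph V} {T₁ T₂ : Set V} {M N : Set (Sym2 V)}
    (h₁ : IsJoin G T₁ M) (h₂ : IsJoin G T₂ N) : IsJoin G (symmDiff T₁ T₂) (symmDiff M N) := by
  rw [isJoin_iff] at *
  refine ⟨fun e he => ?_, by rw [bd_symmDiff, h₁.2, h₂.2]⟩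
  rcases he with h | h
  · exact h₁.1 h.1
  · exact h₂.1 h.1

lemma isJoin_edge {G : SimpleGraph V} {x y : V} (h : G.Adj x y) :
    IsJoin G (symmDiff {x} {y}) {s(x, y)} :=
  isJoin_iff.2 ⟨by simpa using h, bd_edge h.ne⟩

lemma isJoin_trail [Finite V] {G : SimpleGraph V} {u v : V} (p : G.Walk u v) (hp : p.IsTrail) :
    IsJoin G (symmDiff {u} {v}) {e | e ∈ p.edges} := by
  induction p with
  | nil => simp [isJoin_iff, bd_empty]
  | @cons u w v h p ih =>
    rw [Walk.isTrail_cons] at hp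
    have key : {e | e ∈ (Walk.cons h p).edges} = symmDiff {s(u, w)} {e | e ∈ p.edges} := by
      ext e
      simp only [Walk.edges_cons, List.mem_cons, Set.mem_ofPred_eq, Set.mem_symmDiff,
        Set.mem_singleton_iff]
      constructor
      · rintro (rfl | h)
        · exact Or.inl ⟨rfl, hp.2⟩
        · exact Or.inr ⟨h, fun h' => hp.2 (h' ▸ h)⟩
      · tauto
    rw [key]
    have := (isJoin_edge h).symmDiff (ih hp.1)
    rwa [symmDiff_assoc, symmDiff_symmDiff_cancel_left] at this

/-- Inside an edge set, every odd vertex is connected to another odd vertex: leave `p` along an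
edge, delete that edge, and repeat from its other end. -/
lemma exists_walk_of_mem_bd [Finite V] {G : SimpleGraph V} (n : ℕ) :
    ∀ (O : Set V) (N : Set (Sym2 V)) (p : V), N.ncard = n → IsJoin G O N → p ∈ O →
      ∃ j ∈ O, j ≠ p ∧ ∃ w : G.Walk p j, ∀ e ∈ w.edges, e ∈ N := by
  induction n with
  | zero =>
    intro O N p hn hN hp
    rw [Set.ncard_eq_zero (Set.toFinite _)] at hn
    subst hn
    rw [isJoin_iff, bd_empty] at hN
    rw [← hN.2] at hp
    exact hp.elim
  | succ n ih =>
    intro O N p hn hN hp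
    have hne : {e ∈ N | p ∈ e}.Nonempty := by
      rw [← Set.ncard_pos (Set.toFinite _)]
      exact ((hN.2 p).2 hp).pos
    obtain ⟨e, heN, hpe⟩ := hne
    obtain ⟨q, rfl⟩ := Sym2.mem_iff_exists.1 hpe
    have hadj : G.Adj p q := hN.1 heN
    by_cases hq : q ∈ O
    · exact ⟨q, hq, hadj.ne', Walk.cons hadj Walk.nil, by simpa using heN⟩
    have hN' : N \ {s(p, q)} = symmDiff N {s(p, q)} := by
      ext e
      simp only [Set.mem_sdiff, Set.mem_symmDiff, Set.mem_singleton_iff]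
      constructor
      · exact Or.inl
      · rintro (h | ⟨rfl, h⟩)
        · exact h
        · exact absurd heN h
    have hj := hN.symmDiff (isJoin_edge hadj)
    obtain ⟨j, hj, hjq, w, hw⟩ := ih _ (N \ {s(p, q)}) q
      (by have := Set.ncard_sdiff_singleton_add_one heN (Set.toFinite _); omega)
      (by rw [hN']; exact hj) (by simp [Set.mem_symmDiff, hq, hadj.ne'])
    simp only [Set.mem_symmDiff, Set.mem_singleton_iff] at hj
    refine ⟨j, ?_, ?_, Walk.cons hadj w, ?_⟩
    · rcases hj with hj | ⟨⟨rfl, -⟩ | hj, -⟩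
      · exact hj.1
      · exact hp
      · exact absurd hj.1 hjq
    · rintro rfl; tauto
    · intro e he
      rw [Walk.edges_cons, List.mem_cons] at he
      rcases he with rfl | he
      · exact heN
      · exact (hw e he).1

lemma ncard_symmDiff_add [Finite V] {M P : Set (Sym2 V)} :
    (symmDiff M P).ncard + 2 * (P ∩ M).ncard = M.ncard + P.ncard := by
  have h1 : (symmDiff M P).ncard = (M \ P).ncard + (P \ M).ncard := by
    rw [Set.symmDiff_def]
    exact Set.ncard_union_eq (Set.disjoint_left.2 fun x hx hx' => hx'.2 hx.1)
      (Set.toFinite _) (Set.toFinite _)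
  have h2 := Set.ncard_inter_add_ncard_sdiff_eq_ncard M P (Set.toFinite _)
  have h3 := Set.ncard_inter_add_ncard_sdiff_eq_ncard P M (Set.toFinite _)
  rw [Set.inter_comm] at h2
  omega

/-- Swapping `P ⊆ M ∆ N` between `M` and `N` preserves the total size. -/
lemma ncard_swap [Finite V] {M N P : Set (Sym2 V)} (hP : P ⊆ symmDiff M N) :
    (symmDiff M P).ncard + (symmDiff N P).ncard = M.ncard + N.ncard := by
  have h1 := ncard_symmDiff_add (M := M) (P := P)
  have h2 := ncard_symmDiff_add (M := N) (P := P)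
  have h3 : P.ncard = (P ∩ M).ncard + (P ∩ N).ncard := by
    rw [← Set.ncard_union_eq _ (Set.toFinite _) (Set.toFinite _)]
    · congr 1
      ext e
      have := @hP e
      simp only [Set.mem_symmDiff, Set.mem_union, Set.mem_inter_iff] at *
      tauto
    · rw [Set.disjoint_left]
      intro e he he'
      have := hP he.1
      simp only [Set.mem_symmDiff, Set.mem_inter_iff] at *
      tauto
  omega

/-- The exchange property of joins, with the exchanged set of edges presented as a path. -/
lemma exists_exchange [Finite V] {G : SimpleGraph V} {T₁ T₂ : Set V} {M N : Set (Sym2 V)}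
    (h₁ : IsJoin G T₁ M) (h₂ : IsJoin G T₂ N) {p : V} (hp : p ∈ symmDiff T₁ T₂) :
    ∃ j ∈ symmDiff T₁ T₂, j ≠ p ∧ ∃ w : G.Walk p j, w.IsPath ∧
      (symmDiff M {e | e ∈ w.edges}).ncard + (symmDiff N {e | e ∈ w.edges}).ncard
        = M.ncard + N.ncard := by
  classical
  obtain ⟨j, hj, hjp, w, hw⟩ := exists_walk_of_mem_bd _ _ _ p rfl (h₁.symmDiff h₂) hp
  exact ⟨j, hj, hjp, w.bypass, w.bypass_isPath,
    ncard_swap fun e he => hw e (w.edges_bypass_subset_edges he)⟩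

/-! ### Minimum joins -/

lemma IsJoin.nu_le {G : SimpleGraph V} {T : Set V} {M : Set (Sym2 V)} (h : IsJoin G T M) :
    nu G T ≤ M.ncard := Nat.sInf_le ⟨M, h, rfl⟩

lemma exists_minJoin {G : SimpleGraph V} {T : Set V} (h : ∃ M, IsJoin G T M) :
    ∃ M, IsMinJoin G T M := by
  obtain ⟨M, hM⟩ := h
  obtain ⟨N, h1, h2⟩ := Nat.sInf_mem (s := {n | ∃ F : Set (Sym2 V), IsJoin G T F ∧ F.ncard = n})
    ⟨_, M, hM, rfl⟩
  exact ⟨N, h1, h2⟩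

lemma exists_join_of_reachable [Finite V] {G : SimpleGraph V} {T : Set V}
    (h : ∃ M, IsJoin G T M) {u v : V} (huv : G.Reachable u v) :
    ∃ M, IsJoin G (symmDiff T (symmDiff {u} {v})) M := by
  classical
  obtain ⟨M, hM⟩ := h
  obtain ⟨p⟩ := huv
  exact ⟨_, hM.symmDiff (isJoin_trail p.bypass p.bypass_isPath.isTrail)⟩

/-- `ν` changes by at most one along an edge of `G`. -/
lemma nu_edge_le [Finite V] {G : SimpleGraph V} {T : Set V} (h : ∃ M, IsJoin G T M) {x y : V}
    (hxy : G.Adj x y) : nu G (symmDiff T (symmDiff {x} {y})) ≤ nu G T + 1 := by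
  obtain ⟨M, hM, hc⟩ := exists_minJoin h
  have := (hM.symmDiff (isJoin_edge hxy)).nu_le
  have h2 := ncard_symmDiff_add (M := M) (P := {s(x, y)})
  rw [Set.ncard_singleton] at h2
  omega

lemma le_nu_edge [Finite V] {G : SimpleGraph V} {T : Set V} (h : ∃ M, IsJoin G T M) {x y : V}
    (hxy : G.Adj x y) : nu G T ≤ nu G (symmDiff T (symmDiff {x} {y})) + 1 := by
  have := nu_edge_le (exists_join_of_reachable h hxy.reachable) hxy
  rwa [symmDiff_symmDiff_cancel_right] at this

lemma nu_edge_ne [Finite V] {G : SimpleGraph V} (hG : G.Colorable 2) {T : Set V}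
    (h : ∃ M, IsJoin G T M) {x y : V}
    (hxy : G.Adj x y) : nu G T ≠ nu G (symmDiff T (symmDiff {x} {y})) := by
  obtain ⟨C⟩ := hG
  obtain ⟨M, hM, hMc⟩ := exists_minJoin h
  obtain ⟨N, hN, hNc⟩ := exists_minJoin (exists_join_of_reachable h hxy.reachable)
  have hj := (hM.symmDiff hN).symmDiff (isJoin_edge hxy)
  rw [symmDiff_symmDiff_cancel_left, symmDiff_self] at hj
  have h3 := odd_ncard_iff_bd C _ hj.1
  rw [(isJoin_iff.1 hj).2] at h3
  simp only [odd_ncard_symmDiff, hMc, hNc] at h3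
  intro h4
  rw [h4] at h3
  simp at h3

/-! ### The change of `ν` under toggling two terminals -/

/-- `dnu G T u v = ν(G, T ∆ {u} ∆ {v}) - ν(G, T)`. Two singletons are used rather than the pair
`{u, v}`, so that the value is `0` for `u = v`. -/
noncomputable def dnu (G : SimpleGraph V) (T : Set V) (u v : V) : ℤ :=
  nu G (symmDiff T (symmDiff {u} {v})) - nu G T

lemma dnu_self (G : SimpleGraph V) (T : Set V) (u : V) : dnu G T u u = 0 := by
  rw [dnu, symmDiff_self, symmDiff_bot, sub_self]

lemma dnu_comm (G : SimpleGraph V) (T : Set V) (u v : V) : dnu G T u v = dnu G T v u := by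
  simp [dnu, symmDiff_comm]

lemma pair_symm (x y : V) : symmDiff ({x} : Set V) {y} = symmDiff {y} {x} := symmDiff_comm _ _

lemma symmDiff_shift (A B C D : Set V) :
    symmDiff (symmDiff A (symmDiff B C)) (symmDiff B D) = symmDiff A (symmDiff C D) := by
  rw [symmDiff_assoc, symmDiff_symmDiff_symmDiff_comm, symmDiff_self, bot_symmDiff]

lemma nu_exchange [Finite V] {G : SimpleGraph V} {T₁ T₂ : Set V} (h₁ : ∃ M, IsJoin G T₁ M)
    (h₂ : ∃ M, IsJoin G T₂ M) {p : V} (hp : p ∈ symmDiff T₁ T₂) :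
    ∃ j ∈ symmDiff T₁ T₂, j ≠ p ∧
      nu G (symmDiff T₁ (symmDiff {p} {j})) + nu G (symmDiff T₂ (symmDiff {p} {j}))
        ≤ nu G T₁ + nu G T₂ := by
  obtain ⟨M, hM, hMc⟩ := exists_minJoin h₁
  obtain ⟨N, hN, hNc⟩ := exists_minJoin h₂
  obtain ⟨j, hj, hjp, w, hw, hc⟩ := exists_exchange hM hN hp
  have hP := isJoin_trail w hw.isTrail
  have h3 := (hM.symmDiff hP).nu_le
  have h4 := (hN.symmDiff hP).nu_le
  exact ⟨j, hj, hjp, by omega⟩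

/-! ### Factor-connectivity and the Kotzig–Lovász relation -/

section Basic

variable {G : SimpleGraph V} {T : Set V}

lemma Allowed.adj {p q : V} (h : Allowed G T s(p, q)) : G.Adj p q := by
  obtain ⟨F, hF, he⟩ := h
  exact hF.1.1 he

lemma FactorConnected.reachable {u v : V} (h : FactorConnected G T u v) : G.Reachable u v :=
  ⟨h.choose⟩

lemma FactorConnected.symm {u v : V} (h : FactorConnected G T u v) : FactorConnected G T v u := by
  obtain ⟨p, hp⟩ := h
  exact ⟨p.reverse, by simpa using hp⟩

lemma FactorConnected.trans {u v w : V} (h : FactorConnected G T u v)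
    (h' : FactorConnected G T v w) : FactorConnected G T u w := by
  obtain ⟨p, hp⟩ := h
  obtain ⟨q, hq⟩ := h'
  refine ⟨p.append q, fun e he => ?_⟩
  rw [Walk.edges_append, List.mem_append] at he
  exact he.elim (hp e) (hq e)

lemma FactorConnected.refl (u : V) : FactorConnected G T u u := ⟨Walk.nil, by simp⟩

lemma distF_of_not_reachable {F : Set (Sym2 V)} {u v : V} (h : ¬ G.Reachable u v) :
    distF G F u v = 0 := by
  have : {n : ℤ | ∃ p : G.Walk u v, p.IsPath ∧ walkWt F p = n} = ∅ := by
    ext n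
    simp only [Set.mem_ofPred_eq, Set.mem_empty_iff_false, iff_false]
    rintro ⟨p, -⟩
    exact h ⟨p⟩
  rw [distF, this]
  simp

/-- Induction along a walk of allowed edges. -/
lemma FactorConnected.induct {P : V → Prop} {u v : V} (h : FactorConnected G T u v) (hu : P u)
    (step : ∀ p q, FactorConnected G T u p → Allowed G T s(p, q) → P p → P q) : P v := by
  obtain ⟨w, hw⟩ := h.symm
  suffices H : FactorConnected G T u v ∧ P v from H.2
  clear h
  induction w with
  | nil => exact ⟨.refl _, hu⟩
  | @cons a b c hab w ih =>
    simp only [Walk.edges_cons, List.mem_cons, forall_eq_or_imp] at hw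
    obtain ⟨h1, h2⟩ := ih hu step hw.2
    have hb : Allowed G T s(b, a) := by rw [Sym2.eq_swap]; exact hw.1
    exact ⟨h1.trans ⟨Walk.cons hb.adj Walk.nil, by simpa using hb⟩, step b a h1 hb h2⟩

lemma klRel_iff {u v : V} :
    klRel G T u v ↔ FactorConnected G T u v ∧ dnu G T u v = 0 := by
  by_cases huv : u = v
  · subst huv
    simp [klRel, dnu_self, FactorConnected.refl]
  · have : symmDiff {u} {v} = ({u, v} : Set V) := by
      ext x
      simp only [Set.mem_symmDiff, Set.mem_singleton_iff, Set.mem_insert_iff]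
      grind
    simp only [klRel, huv, false_or, dnu, this]
    refine and_congr_right fun _ => ?_
    omega

lemma klRel.symm {u v : V} (h : klRel G T u v) : klRel G T v u := by
  rw [klRel_iff] at *
  exact ⟨h.1.symm, by rw [dnu_comm]; exact h.2⟩

end Basic

/-! ### The four-point inequality -/

section Bipartite

variable [Finite V] {G : SimpleGraph V} {T : Set V}

lemma dnu_step (hG : G.Colorable 2) (hT : ∃ M, IsJoin G T M) {x p q : V} (hx : G.Reachable x p)
    (hpq : G.Adj p q) : dnu G T x q = dnu G T x p + 1 ∨ dnu G T x q = dnu G T x p - 1 := by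
  have hj := exists_join_of_reachable hT hx
  have h1 := nu_edge_le hj hpq
  have h2 := le_nu_edge hj hpq
  have h3 := nu_edge_ne hG hj hpq
  rw [pair_symm x p, symmDiff_shift, ← pair_symm x p] at h1 h2 h3
  simp only [dnu]
  omega

lemma neg_one_le_dnu (hG : G.Colorable 2) (hT : ∃ M, IsJoin G T M) {p q : V}
    (hpq : G.Adj p q) : -1 ≤ dnu G T p q := by
  have := dnu_step hG hT (Reachable.refl p) hpq
  rw [dnu_self] at this
  omega

/-- The four-point inequality. Exchange at `x` between minimum joins for `T ∆ {x} ∆ {p}` and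
`T ∆ {t} ∆ {q}`. If `x` is paired with `t`, the new terminal sets are `T ∆ {p} ∆ {t}` and
`T ∆ {x} ∆ {q}`, which gives the first alternative. If `x` is paired with `p` or `q`, then toggling
`p` and `q` in one of the two new terminal sets turns them into `T` and `T ∆ {x} ∆ {t}`, at a cost
of at most one. -/
lemma four_point (hG : G.Colorable 2) (hT : ∃ M, IsJoin G T M) {x t p q : V}
    (hx : G.Reachable x p) (ht : G.Reachable t p) (hpq : G.Adj p q) :
    dnu G T x q + dnu G T t p ≤ dnu G T x p + dnu G T t q ∨
      dnu G T x t - 1 ≤ dnu G T x p + dnu G T t q := by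
  have hpq1 := neg_one_le_dnu hG hT hpq
  by_cases hxp : x = p
  · subst hxp
    have := dnu_step hG hT ht hpq
    rw [dnu_self, dnu_comm G T x t]
    omega
  by_cases hxt : x = t
  · subst hxt
    left; omega
  by_cases hxq : x = q
  · subst hxq
    rw [dnu_comm G T x t, dnu_comm G T x p]
    right; omega
  have h1 := exists_join_of_reachable hT hx
  have h2 := exists_join_of_reachable hT (ht.trans hpq.reachable)
  have heq : symmDiff (symmDiff T (symmDiff {x} {p})) (symmDiff T (symmDiff {t} {q}))
      = symmDiff (symmDiff {x} {p}) (symmDiff {t} {q}) := by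
    rw [symmDiff_symmDiff_symmDiff_comm, symmDiff_self, bot_symmDiff]
  obtain ⟨j, hj, hjx, hle⟩ := nu_exchange h1 h2 (p := x) (by
    rw [heq]; simp [Set.mem_symmDiff, hxp, hxt, hxq])
  have hj' : j = p ∨ j = t ∨ j = q := by
    rw [heq] at hj
    simp only [Set.mem_symmDiff, Set.mem_singleton_iff] at hj
    tauto
  simp only [dnu] at *
  rcases hj' with rfl | rfl | rfl
  · have h3 := le_nu_edge (exists_join_of_reachable hT (hx.trans ht.symm)) hpq
    have h4 : symmDiff (symmDiff T (symmDiff {t} {q})) (symmDiff {x} {j})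
        = symmDiff (symmDiff T (symmDiff {x} {t})) (symmDiff {j} {q}) := by
      rw [symmDiff_assoc, symmDiff_symmDiff_symmDiff_comm, ← symmDiff_assoc,
        pair_symm t x, pair_symm q j]
    rw [symmDiff_symmDiff_cancel_right, h4] at hle
    right; omega
  · rw [symmDiff_shift, pair_symm x j, symmDiff_shift, pair_symm p j,
      pair_symm q x] at hle
    left; omega
  · rw [symmDiff_shift, pair_symm x j, pair_symm t j, symmDiff_shift, pair_symm t x,
      pair_symm j t] at hle
    right; omega

/-! ### Allowed edges and Kotzig–Lovász classes -/

lemma dnu_of_allowed (hG : G.Colorable 2) {p q : V} (h : Allowed G T s(p, q)) :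
    dnu G T p q = -1 := by
  have hadj := h.adj
  obtain ⟨F, hF, he⟩ := h
  have h1 := dnu_step hG ⟨F, hF.1⟩ (Reachable.refl p) hadj
  have h2 := (hF.1.symmDiff (isJoin_edge hadj)).nu_le
  have h3 := ncard_symmDiff_add (M := F) (P := {s(p, q)})
  rw [Set.inter_eq_left.2 (by simpa using he), Set.ncard_singleton] at h3
  have h4 := hF.2
  rw [dnu_self] at h1
  simp only [dnu] at *
  omega

lemma allowed_of_dnu (hT : ∃ M, IsJoin G T M) {p q : V} (hpq : G.Adj p q)
    (h : dnu G T p q = -1) : Allowed G T s(p, q) := by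
  obtain ⟨M, hM, hMc⟩ := exists_minJoin (exists_join_of_reachable hT hpq.reachable)
  have h1 := hM.symmDiff (isJoin_edge hpq)
  rw [symmDiff_symmDiff_cancel_right] at h1
  have h2 := h1.nu_le
  have h3 := ncard_symmDiff_add (M := M) (P := {s(p, q)})
  rw [Set.ncard_singleton] at h3
  simp only [dnu] at h
  have h4 : ({s(p, q)} ∩ M).ncard = 0 := by omega
  rw [Set.ncard_eq_zero (Set.toFinite _)] at h4
  refine ⟨_, ⟨h1, by omega⟩, Or.inr ⟨rfl, fun h5 => ?_⟩⟩
  exact Set.eq_empty_iff_forall_notMem.1 h4 _ ⟨rfl, h5⟩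

/-- Distances along a sequence of allowed edges are nonpositive. In a shortest violation, from
`x` to `t`, the difference of the distances from `x` and from `t` cannot increase along the
sequence, whereas it has to rise from `-1` to `1`. -/
lemma dnu_chain_le (hG : G.Colorable 2) (hT : ∃ M, IsJoin G T M) (f : ℕ → V) (N : ℕ)
    (hf : ∀ j < N, Allowed G T s(f j, f (j + 1))) :
    ∀ n a, a + n ≤ N → dnu G T (f a) (f (a + n)) ≤ 0 := by
  have hreach : ∀ n a, a + n ≤ N → G.Reachable (f a) (f (a + n)) := by
    intro n
    induction n with
    | zero => intro a _; exact Reachable.refl _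
    | succ n ih =>
      intro a ha
      exact (ih a (by omega)).trans (hf (a + n) (by omega)).adj.reachable
  have hone : ∀ j < N, dnu G T (f j) (f (j + 1)) = -1 := fun j hj => dnu_of_allowed hG (hf j hj)
  intro n
  induction n using Nat.strong_induction_on with
  | _ n ih =>
  intro a ha
  rcases Nat.eq_zero_or_pos n with rfl | hn
  · simp [dnu_self]
  by_contra! hpos
  have hlast := dnu_step hG hT (hreach (n - 1) a (by omega)) (hf (a + (n - 1)) (by omega)).adj
  have hprev := ih (n - 1) (by omega) a (by omega)
  rw [show a + (n - 1) + 1 = a + n by omega] at hlast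
  have hxt : dnu G T (f a) (f (a + n)) = 1 := by omega
  have key : ∀ j ≤ n, dnu G T (f a) (f (a + j)) - dnu G T (f (a + n)) (f (a + j)) ≤ -1 := by
    intro j
    induction j with
    | zero => intro _; rw [Nat.add_zero, dnu_self, dnu_comm]; omega
    | succ j ihj =>
      intro hj
      have hj1 := ihj (by omega)
      have hr := hreach j a (by omega)
      have hr' := hreach (n - j) (a + j) (by omega)
      rw [show a + j + (n - j) = a + n by omega] at hr'
      rcases four_point hG hT hr hr'.symm (hf (a + j) (by omega)).adj with h | h
      · rw [← add_assoc]; omega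
      · rw [← add_assoc]
        have e1 : dnu G T (f a) (f (a + j)) ≤ 0 := ih j (by omega) a (by omega)
        have e2 : dnu G T (f (a + n)) (f (a + j + 1)) ≤ 0 := by
          rw [dnu_comm]
          have := ih (n - j - 1) (by omega) (a + j + 1) (by omega)
          rwa [show a + j + 1 + (n - j - 1) = a + n by omega] at this
        -- The two end steps of the sequence, where one of the distances is not covered by
        -- the induction hypothesis but is known exactly.
        have e3 : dnu G T (f a) (f (a + j + 1)) + dnu G T (f (a + n)) (f (a + j)) ≤ 0 := by
          have b1 : dnu G T (f a) (f (a + j + 1)) ≤ 0 ∨ j + 1 = n := by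
            by_cases hjn : j + 1 = n
            · exact Or.inr hjn
            · exact Or.inl (by
                have := ih (j + 1) (by omega) a (by omega)
                rwa [← add_assoc] at this)
          have b2 : dnu G T (f (a + n)) (f (a + j)) ≤ 0 ∨ j = 0 := by
            by_cases hjn : j = 0
            · exact Or.inr hjn
            · exact Or.inl (by
                rw [dnu_comm]
                have := ih (n - j) (by omega) (a + j) (by omega)
                rwa [show a + j + (n - j) = a + n by omega] at this)
          have o := hone (a + j) (by omega)
          rcases b1 with b1 | b1
          · rcases b2 with b2 | rfl
            · omega
            · rw [dnu_comm G T (f (a + n))]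
              simp only [Nat.add_zero] at *
              omega
          · rw [show a + j + 1 = a + n by omega] at o ⊢
            rw [dnu_comm G T (f (a + n)), hxt, o]
            norm_num
        omega
  have := key n le_rfl
  rw [dnu_self] at this
  omega

lemma dnu_nonpos (hG : G.Colorable 2) (hT : ∃ M, IsJoin G T M) {u v : V}
    (h : FactorConnected G T u v) : dnu G T u v ≤ 0 := by
  obtain ⟨p, hp⟩ := h
  have := dnu_chain_le hG hT p.getVert p.length
    (fun j hj => hp _ (p.mk_mem_edges_iff_exists.2 ⟨j, hj, rfl⟩)) p.length 0 (by omega)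
  simpa using this

/-- Equivalent vertices have the same distance to every vertex. If `x` were farther from `v` than
from `u`, then `dnu x · - dnu v ·` could not increase along a walk of allowed edges from `u` to
`v`. -/
lemma dnu_le_of_klRel (hG : G.Colorable 2) (hT : ∃ M, IsJoin G T M) {u v x : V}
    (h : klRel G T u v) (hx : G.Reachable x u) : dnu G T x v ≤ dnu G T x u := by
  rw [klRel_iff] at h
  by_contra! hlt
  have key := h.1.induct (P := fun p => dnu G T x p - dnu G T v p ≤ dnu G T x u)
    (by rw [dnu_comm G T v u, h.2]; omega)
    (fun p q hup hpq hp => by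
      have hvp := h.1.symm.trans hup
      have e1 := dnu_nonpos hG hT hvp
      have e2 := dnu_nonpos hG hT (hvp.trans ⟨Walk.cons hpq.adj Walk.nil, by simpa using hpq⟩)
      have e3 := dnu_step hG hT hvp.reachable hpq.adj
      rcases four_point hG hT (hx.trans hup.reachable) hvp.reachable hpq.adj with h4 | h4 <;>
        omega)
  rw [dnu_self] at key
  omega

lemma dnu_eq_of_klRel (hG : G.Colorable 2) (hT : ∃ M, IsJoin G T M) {u v x : V}
    (h : klRel G T u v) (hx : G.Reachable x u) : dnu G T x v = dnu G T x u :=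
  le_antisymm (dnu_le_of_klRel hG hT h hx)
    (dnu_le_of_klRel hG hT h.symm (hx.trans (klRel_iff.1 h).1.reachable))

lemma klRel.trans (hG : G.Colorable 2) (hT : ∃ M, IsJoin G T M) {u v w : V}
    (h : klRel G T u v) (h' : klRel G T v w) : klRel G T u w := by
  have h1 := (klRel_iff.1 h)
  have h2 := (klRel_iff.1 h')
  refine klRel_iff.2 ⟨h1.1.trans h2.1, ?_⟩
  rw [dnu_eq_of_klRel hG hT h' h1.1.reachable, h1.2]

lemma IsKLClass.mem_iff (hG : G.Colorable 2) (hT : ∃ M, IsJoin G T M) {S : Set V}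
    (hS : IsKLClass G T S) {u v : V} (hu : u ∈ S) : v ∈ S ↔ klRel G T u v := by
  obtain ⟨w, rfl⟩ := hS
  exact ⟨fun h => klRel.trans hG hT hu (klRel.symm h), fun h => klRel.trans hG hT h.symm hu⟩

lemma IsKLClass.eq_of_mem (hG : G.Colorable 2) (hT : ∃ M, IsJoin G T M) {S S' : Set V}
    (hS : IsKLClass G T S) (hS' : IsKLClass G T S') {u : V} (hu : u ∈ S) (hu' : u ∈ S') :
    S = S' := by
  ext v
  rw [hS.mem_iff hG hT hu, hS'.mem_iff hG hT hu']

/-! ### Distances with respect to a minimum join -/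

lemma sum_edgeWt (F : Set (Sym2 V)) (l : List (Sym2 V)) (hl : l.Nodup) :
    (l.map (edgeWt F)).sum = (symmDiff F {e | e ∈ l}).ncard - F.ncard := by
  induction l with
  | nil =>
    have : {e : Sym2 V | e ∈ ([] : List (Sym2 V))} = ⊥ := by ext; simp
    rw [this, symmDiff_bot]; simp
  | cons e l ih =>
    rw [List.nodup_cons] at hl
    have key : symmDiff F {x | x ∈ e :: l} = symmDiff (symmDiff F {x | x ∈ l}) {e} := by
      ext x
      simp only [List.mem_cons, Set.mem_symmDiff, Set.mem_ofPred_eq, Set.mem_singleton_iff]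
      by_cases hx : x = e
      · subst hx; have := hl.1; tauto
      · tauto
    have h3 := ncard_symmDiff_add (M := symmDiff F {x | x ∈ l}) (P := {e})
    rw [Set.ncard_singleton] at h3
    rw [List.map_cons, List.sum_cons, ih hl.2, key]
    have hmem : e ∈ symmDiff F {x | x ∈ l} ↔ e ∈ F := by
      simp only [Set.mem_symmDiff, Set.mem_ofPred_eq]
      have := hl.1; tauto
    by_cases he : e ∈ F
    · rw [Set.inter_eq_left.2 (by simpa using hmem.2 he), Set.ncard_singleton] at h3
      simp only [edgeWt, he, if_true]
      omega
    · rw [Set.singleton_inter_eq_empty.2 (fun h => he (hmem.1 h)), Set.ncard_empty] at h3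
      simp only [edgeWt, he, if_false]
      omega

lemma walkWt_eq {F : Set (Sym2 V)} {u v : V} {p : G.Walk u v} (hp : p.IsPath) :
    walkWt F p = (symmDiff F {e | e ∈ p.edges}).ncard - F.ncard :=
  sum_edgeWt F _ hp.isTrail.edges_nodup

lemma dnu_le_walkWt {F : Set (Sym2 V)} (hF : IsMinJoin G T F) {u v : V} {p : G.Walk u v}
    (hp : p.IsPath) : dnu G T u v ≤ walkWt F p := by
  have h := (hF.1.symmDiff (isJoin_trail p hp.isTrail)).nu_le
  rw [walkWt_eq hp, dnu, hF.2]
  omega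

lemma exists_path_dnu {F : Set (Sym2 V)} (hF : IsMinJoin G T F) {u v : V}
    (h : G.Reachable u v) : ∃ p : G.Walk u v, p.IsPath ∧ walkWt F p = dnu G T u v := by
  by_cases huv : u = v
  · subst huv
    exact ⟨Walk.nil, Walk.IsPath.nil, by simp [walkWt, dnu_self]⟩
  obtain ⟨M, hM, hMc⟩ := exists_minJoin (exists_join_of_reachable ⟨F, hF.1⟩ h)
  have heq : symmDiff T (symmDiff T (symmDiff {u} {v})) = symmDiff {u} {v} :=
    symmDiff_symmDiff_cancel_left _ _
  obtain ⟨j, hj, hju, w, hw, hc⟩ := exists_exchange hF.1 hM (p := u)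
    (by rw [heq]; simp [Set.mem_symmDiff, huv])
  have hjv : j = v := by
    rw [heq] at hj
    simp only [Set.mem_symmDiff, Set.mem_singleton_iff] at hj
    tauto
  subst hjv
  refine ⟨w, hw, le_antisymm ?_ (dnu_le_walkWt hF hw)⟩
  have h1 := hM.symmDiff (isJoin_trail w hw.isTrail)
  rw [symmDiff_symmDiff_cancel_right] at h1
  have h2 := h1.nu_le
  rw [walkWt_eq hw, dnu]
  have := hF.2
  omega

lemma distF_eq {F : Set (Sym2 V)} (hF : IsMinJoin G T F) {u v : V} (h : G.Reachable u v) :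
    distF G F u v = dnu G T u v := by
  refine IsLeast.csInf_eq ⟨exists_path_dnu hF h, ?_⟩
  rintro n ⟨p, hp, rfl⟩
  exact dnu_le_walkWt hF hp

end Bipartite

/-! ### Distance components -/

section Cut

variable {G : SimpleGraph V} {T : Set V}

lemma IsComponentOf.reachable {K : Set V} (hconn : (G.induce K).Connected) {a b : V} (ha : a ∈ K)
    (hb : b ∈ K) : G.Reachable a b :=
  (hconn.preconnected ⟨a, ha⟩ ⟨b, hb⟩).map (Embedding.induce K).toHom

lemma exists_entry {K : Set V} {u v : V} (p : G.Walk u v) (hu : u ∉ K) (hv : v ∈ K) :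
    ∃ (x a : V) (h : G.Adj x a) (p₁ : G.Walk u x) (p₂ : G.Walk a v),
      p = p₁.append (Walk.cons h p₂) ∧ x ∉ K ∧ a ∈ K := by
  induction p with
  | nil => exact absurd hv hu
  | @cons u w v h p ih =>
    by_cases hw : w ∈ K
    · exact ⟨u, w, h, Walk.nil, p, rfl, hu, hw⟩
    · obtain ⟨x, a, h', p₁, p₂, rfl, hx, ha⟩ := ih hw hv
      exact ⟨x, a, h', Walk.cons h p₁, p₂, rfl, hx, ha⟩

lemma IsRootClass.mem {K S_K : Set V} (h : IsRootClass G T K S_K) {a x : V} (ha : a ∈ K)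
    (hx : x ∉ K) (he : Allowed G T s(a, x)) : a ∈ S_K :=
  h.2 _ ⟨he.adj, a, x, rfl, ha, hx⟩ he a (Sym2.mem_mk_left _ _) ha

lemma IsAntirootClass.mem {K T_K : Set V} (h : IsAntirootClass G T K T_K) {a x : V} (ha : a ∈ K)
    (hx : x ∉ K) (he : Allowed G T s(a, x)) : x ∈ T_K :=
  h.2 _ ⟨he.adj, a, x, rfl, ha, hx⟩ he x (Sym2.mem_mk_right _ _) hx

/-- A distance component from which an edge leaves is reachable from the root: otherwise all
distances from `r` to `K` and to its neighbours would take the junk value `0`. -/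
lemma reachable_of_cut {r : V} {i : ℤ} {K : Set V} {F : Set (Sym2 V)}
    (hK : IsDistCompAt G F r i K) {k k' : V} (hk : k ∈ K) (hk' : k' ∉ K)
    (hadj : G.Adj k k') : ∀ z ∈ K, G.Reachable r z := by
  obtain ⟨-, -, hsub, hconn, hclosed⟩ := hK
  have hrk : G.Reachable r k := by
    by_contra h
    have h1 : distF G F r k ≤ i := hsub hk
    have h2 : ¬ G.Reachable r k' := fun h' => h (h'.trans hadj.symm.reachable)
    rw [distF_of_not_reachable h] at h1
    exact hk' (hclosed k hk k' (by rw [Set.mem_ofPred_eq, distF_of_not_reachable h2]; exact h1)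
      hadj)
  exact fun z hz => hrk.trans (IsComponentOf.reachable hconn hk hz)

end Cut

section Component

variable [Finite V] {G : SimpleGraph V} {T : Set V}

variable {r : V} {i : ℤ} {K : Set V}

/-- A vertex `z` of a distance component `K` at level `i` is at distance at least `dnu r z - i`
from every vertex of `A(K)`: along a walk inside `K`, the difference of the distances from `r` and
from `t` can only exceed `i` across an edge with both ends at level `i`, and such an edge does not
exist in a bipartite graph. -/
lemma sub_le_dnu (hG : G.Colorable 2) (hT : ∃ M, IsJoin G T M) (hconn : (G.induce K).Connected)
    (hr : ∀ z ∈ K, G.Reachable r z) (hle : ∀ z ∈ K, dnu G T r z ≤ i) {t z : V} (ht : t ∈ K)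
    (hti : dnu G T r t = i) (hz : z ∈ K) : dnu G T r z - i ≤ dnu G T t z := by
  have key : ∀ (a b : K), (G.induce K).Walk a b → dnu G T r a - dnu G T t a ≤ i →
      dnu G T r b - dnu G T t b ≤ i := by
    intro a b w
    induction w with
    | nil => exact id
    | @cons a b c hab w ih =>
      intro ha
      refine ih ?_
      have hadj : G.Adj a b := hab
      have h1 := hle a a.2
      have h2 := hle b b.2
      have h3 := dnu_step hG hT (hr a a.2) hadj
      rcases four_point hG hT (hr a a.2) ((hr t ht).symm.trans (hr a a.2)) hadj with h | h <;>
        omega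
  obtain ⟨w⟩ := hconn.preconnected ⟨t, ht⟩ ⟨z, hz⟩
  have := key _ _ w (by simp [dnu_self, hti])
  simp only at this
  omega

variable {F : Set (Sym2 V)}

lemma dnu_le_level (hF : IsMinJoin G T F) (hK : IsDistCompAt G F r i K)
    (hr : ∀ z ∈ K, G.Reachable r z) : ∀ z ∈ K, dnu G T r z ≤ i := fun z hz => by
  rw [← distF_eq hF (hr z hz)]; exact hK.2.2.1 hz

lemma dnu_of_cut (hG : G.Colorable 2) (hF : IsMinJoin G T F) (hK : IsDistCompAt G F r i K)
    (hr : ∀ z ∈ K, G.Reachable r z) {a x : V} (ha : a ∈ K) (hx : x ∉ K) (hadj : G.Adj a x) :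
    dnu G T r a = i ∧ dnu G T r x = i + 1 := by
  have h1 := dnu_le_level hF hK hr a ha
  have h2 : i < dnu G T r x := by
    by_contra! h
    rw [← distF_eq hF ((hr a ha).trans hadj.reachable)] at h
    exact hx (hK.2.2.2.2 a ha x h hadj)
  have h3 := dnu_step hG ⟨F, hF.1⟩ (hr a ha) hadj
  omega

/-- If an edge leaves the decapital distance component `K`, then some allowed edge does: the edge
by which a shortest path from `r` to a vertex of `A(K)` enters `K` has weight `-1`. -/
lemma exists_allowed_cut (hG : G.Colorable 2) (hF : IsMinJoin G T F)
    (hK : IsDistCompAt G F r i K) (hrK : r ∉ K) {k k' : V} (hk : k ∈ K) (hk' : k' ∉ K)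
    (hadj : G.Adj k k') : ∃ a ∈ K, ∃ x ∉ K, Allowed G T s(a, x) := by
  have hT : ∃ M, IsJoin G T M := ⟨F, hF.1⟩
  have hr := reachable_of_cut hK hk hk' hadj
  have hki := (dnu_of_cut hG hF hK hr hk hk' hadj).1
  obtain ⟨p, hp, hpw⟩ := exists_path_dnu hF (hr k hk)
  obtain ⟨x, a, h, p₁, p₂, rfl, hx, ha⟩ := exists_entry p hrK hk
  have h1 := dnu_le_walkWt hF hp.of_append_left
  have h2 := dnu_le_walkWt hF hp.of_append_right.of_cons
  obtain ⟨h3, h4⟩ := dnu_of_cut hG hF hK hr ha hx h.symm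
  have h5 := sub_le_dnu hG hT hK.2.2.2.1 hr (dnu_le_level hF hK hr) hk hki ha
  rw [dnu_comm G T k a] at h5
  simp only [walkWt, Walk.edges_append, Walk.edges_cons, List.map_append, List.map_cons,
    List.sum_append, List.sum_cons] at *
  have he : s(x, a) ∈ F := by
    by_contra he
    rw [edgeWt, if_neg he] at hpw
    omega
  exact ⟨a, ha, x, hx, F, hF, by rwa [Sym2.eq_swap]⟩

/-- A negative set `X` for `S ⊆ K` stays inside `K`, provided that its vertices across the boundary
from `S` are not at negative distance from `S`, nor are the boundary vertices of `K` outside `S`. -/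
lemma IsNegSet.subset (hF : IsMinJoin G T F) {S X : Set V} (hSK : S ⊆ K) (hX : IsNegSet G F S X)
    (h₁ : ∀ a ∈ S, ∀ x ∉ K, x ∈ X → G.Adj x a → ∀ s ∈ S, 0 ≤ dnu G T s x)
    (h₂ : ∀ a ∈ K, a ∉ S → ∀ x ∉ K, G.Adj x a → ∀ s ∈ S, 0 ≤ dnu G T s a) : X ⊆ K := by
  intro x hx
  by_contra hxK
  have hneg : ∀ z ∈ X, ¬ ∀ s ∈ S, 0 ≤ dnu G T s z := by
    intro z hz h
    obtain ⟨y, hy, p, hp, hpw, -⟩ := hX.2 z hz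
    have h3 := dnu_le_walkWt hF hp
    have h4 := h y hy
    rw [dnu_comm] at h4
    omega
  obtain ⟨y, hy, p, hp, -, hsupp⟩ := hX.2 x hx
  obtain ⟨x', a, h, p₁, p₂, rfl, hx', ha⟩ := exists_entry p hxK (hSK hy)
  have hx'X : x' ∈ X := hsupp x' (by simp) (fun he => hx' (he ▸ hSK hy))
  by_cases haS : a ∈ S
  · exact hneg x' hx'X (h₁ a haS x' hx' hx'X h)
  · exact hneg a (hsupp a (by simp) (fun he => haS (he ▸ hy))) (h₂ a ha haS x' hx' h)

/-- Every member of `𝒜(K)` lies inside `K`. A walk of allowed edges starting in `A(K)` leaves `K`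
at a vertex `p` of the root class; as `p` is at distance `0` from the starting point, the two
vertices are equivalent. -/
lemma subset_of_mem_famA (hG : G.Colorable 2) (hF : IsMinJoin G T F)
    (hK : IsDistCompAt G F r i K) {S_K S : Set V} (hSK : IsRootClass G T K S_K)
    (hS : S ∈ famA G T F r i K S_K) : S ⊆ K := by
  have hT : ∃ M, IsJoin G T M := ⟨F, hF.1⟩
  rcases hS with rfl | ⟨hS, hne, t, htS, htK, hti⟩
  · exact Set.inter_subset_left
  intro s hs
  have hts := klRel_iff.1 ((hS.mem_iff hG hT htS).1 hs)
  refine hts.1.induct (P := (· ∈ K)) htK fun p q htp hpq hp => ?_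
  by_contra hq
  have hr := reachable_of_cut hK hp hq hpq.adj
  have hpi := (dnu_of_cut hG hF hK hr hp hq hpq.adj).1
  have hti' : dnu G T r t = i := by rw [← distF_eq hF (hr t htK)]; exact hti
  have h1 := sub_le_dnu hG hT hK.2.2.2.1 hr (dnu_le_level hF hK hr) htK hti' hp
  have h2 := dnu_nonpos hG hT htp
  have h3 : klRel G T t p := klRel_iff.2 ⟨htp, by omega⟩
  exact hne (hS.eq_of_mem hG hT hSK.1 ((hS.mem_iff hG hT htS).2 h3) (hSK.mem hp hq hpq))

/-- Every member of `𝒜(K)` consists of pairwise equivalent vertices. -/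
lemma klRel_of_mem_famA (hG : G.Colorable 2) (hF : IsMinJoin G T F) {S_K S : Set V}
    (hSK : IsRootClass G T K S_K) (hS : S ∈ famA G T F r i K S_K) {s y : V} (hs : s ∈ S)
    (hy : y ∈ S) : klRel G T s y := by
  have hT : ∃ M, IsJoin G T M := ⟨F, hF.1⟩
  rcases hS with rfl | ⟨hS, -⟩
  · exact (hSK.1.mem_iff hG hT hs.2).1 hy.2
  · exact (hS.mem_iff hG hT hs).1 hy

/-- If an edge leaves `K`, every member of `𝒜(K)` lies at level `i`. For the root fragment this
holds since the root class contains an end of an allowed edge leaving `K`. -/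
lemma dnu_of_mem_famA (hG : G.Colorable 2) (hF : IsMinJoin G T F)
    (hK : IsDistCompAt G F r i K) (hrK : r ∉ K) {S_K S : Set V} (hSK : IsRootClass G T K S_K)
    (hS : S ∈ famA G T F r i K S_K) {k k' : V} (hk : k ∈ K) (hk' : k' ∉ K)
    (hadj : G.Adj k k') {s : V} (hs : s ∈ S) : dnu G T r s = i := by
  have hT : ∃ M, IsJoin G T M := ⟨F, hF.1⟩
  have hr := reachable_of_cut hK hk hk' hadj
  rcases hS with rfl | ⟨hS, -, t, htS, htK, hti⟩
  · obtain ⟨a, ha, x, hx, he⟩ := exists_allowed_cut hG hF hK hrK hk hk' hadj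
    rw [dnu_eq_of_klRel hG hT ((hSK.1.mem_iff hG hT (hSK.mem ha hx he)).1 hs.2) (hr a ha)]
    exact (dnu_of_cut hG hF hK hr ha hx he.adj).1
  · rw [dnu_eq_of_klRel hG hT ((hS.mem_iff hG hT htS).1 hs) (hr t htK), ← distF_eq hF (hr t htK)]
    exact hti

/-- If the edge `xy` is not allowed, then `x` is at distance `1` from `y`, hence from every vertex
equivalent to `y`. -/
lemma dnu_eq_one (hG : G.Colorable 2) (hT : ∃ M, IsJoin G T M) {s x y : V}
    (hxy : G.Adj x y) (hsy : klRel G T s y) (hna : ¬ Allowed G T s(y, x)) : dnu G T s x = 1 := by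
  have h1 := dnu_step hG hT (Reachable.refl y) hxy.symm
  have h2 : dnu G T y x ≠ -1 := fun h => hna (allowed_of_dnu hT hxy.symm h)
  rw [dnu_comm, dnu_eq_of_klRel hG hT hsy.symm hxy.reachable, dnu_comm]
  rw [dnu_self] at h1
  omega

/-- If no allowed edge joins `S ∈ 𝒜(K)` to a vertex outside `K ∪ Y`, the outside neighbours of `S`
not in `Y` are at distance `1`, and negative sets for `S` avoiding `Y` stay inside `K`. The relevant
choices of `Y` are the empty set and the antiroot class. -/
lemma famA_aux (hG : G.Colorable 2) (hF : IsMinJoin G T F)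
    (hK : IsDistCompAt G F r i K) (hrK : r ∉ K) {S_K S Y : Set V} (hSK : IsRootClass G T K S_K)
    (hS : S ∈ famA G T F r i K S_K)
    (hna : ∀ y ∈ S, ∀ x ∉ K, x ∉ Y → ¬ Allowed G T s(y, x)) :
    (∀ s ∈ S, ∀ x ∉ K, x ∉ Y → (∃ y ∈ S, G.Adj x y) → distF G F s x = 1) ∧
      ∀ X, IsNegSet G F S X → Disjoint X Y → X ⊆ K := by
  have hT : ∃ M, IsJoin G T M := ⟨F, hF.1⟩
  have hsub := subset_of_mem_famA hG hF hK hSK hS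
  have hone : ∀ y ∈ S, ∀ x ∉ K, x ∉ Y → G.Adj x y → ∀ s ∈ S, dnu G T s x = 1 :=
    fun y hy x hx hxY hxy s hs =>
      dnu_eq_one hG hT hxy (klRel_of_mem_famA hG hF hSK hS hs hy) (hna y hy x hx hxY)
  refine ⟨?_, fun X hX hXY => hX.subset hF hsub ?_ ?_⟩
  · rintro s hs x hx hxY ⟨y, hy, hxy⟩
    rw [distF_eq hF ((IsComponentOf.reachable hK.2.2.2.1 (hsub hs) (hsub hy)).trans
      hxy.symm.reachable)]
    exact hone y hy x hx hxY hxy s hs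
  · intro a ha x hx hxX hxa s hs
    rw [hone a ha x hx (Set.disjoint_left.1 hXY hxX) hxa s hs]
    exact zero_le_one
  · intro a ha _ x hx hxa s hs
    have hr := reachable_of_cut hK ha hx hxa.symm
    have h1 := dnu_of_mem_famA hG hF hK hrK hSK hS ha hx hxa.symm hs
    have h2 := (dnu_of_cut hG hF hK hr ha hx hxa.symm).1
    have h3 := sub_le_dnu hG hT hK.2.2.2.1 hr (dnu_le_level hF hK hr) (hsub hs) h1 ha
    omega

end Component


/-- Let `K` be a decapital distance component (at level `i`) w.r.t.
`r`, with root class `S_K` (root fragment `K ∩ S_K`) and antiroot class `T_K`, and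
let `S ∈ 𝒜(K)`. Then (i) if `S` is not the root fragment, `dist_F(s, x) = 1` for
every `s ∈ S` and every `x ∉ K` adjacent to a vertex of `S`, and `V(G) \ K` is
disjoint from the maximum `F`-negative set for `S`; (ii) if `S` is the root
fragment, the same holds for every `x ∉ K ∪ T_K` adjacent to a vertex of `S`, and
`V(G) \ K` is disjoint from the maximum `F`-negative set for `S` avoiding `T_K`. -/
theorem stmt_18 {V : Type*} [Fintype V] [DecidableEq V]
    (G : SimpleGraph V) (T : Set V) (hbip : G.Colorable 2) (hgraft : IsGraft G T)
    (F : Set (Sym2 V)) (hF : IsMinJoin G T F)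
    (r : V) (i : ℤ) (K : Set V)
    (hK : IsDistCompAt G F r i K) (hdecap : r ∉ K)
    (S_K : Set V) (hSK : IsRootClass G T K S_K)
    (T_K : Set V) (hTK : IsAntirootClass G T K T_K)
    (S : Set V) (hS : S ∈ famA G T F r i K S_K) :
    (S ≠ K ∩ S_K →
      (∀ s ∈ S, ∀ x : V, x ∉ K → (∃ y ∈ S, G.Adj x y) → distF G F s x = 1) ∧
      Disjoint Kᶜ (maxNegSet G F S)) ∧
    (S = K ∩ S_K →
      (∀ s ∈ S, ∀ x : V, x ∉ K → x ∉ T_K → (∃ y ∈ S, G.Adj x y) →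
        distF G F s x = 1) ∧
      Disjoint Kᶜ (maxNegSetAvoiding G F S T_K)) := by
  have hT : ∃ M, IsJoin G T M := ⟨F, hF.1⟩
  have hsub := subset_of_mem_famA hbip hF hK hSK hS
  constructor
  · intro hne
    obtain ⟨h1, h2⟩ := famA_aux (Y := ∅) hbip hF hK hdecap hSK hS (by
      intro y hy x hx _ he
      rcases hS with h | ⟨hS, hne', -⟩
      · exact hne h
      · exact hne' (hS.eq_of_mem hbip hT hSK.1 hy (hSK.mem (hsub hy) hx he)))
    refine ⟨fun s hs x hx => h1 s hs x hx (Set.notMem_empty x), ?_⟩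
    rw [Set.disjoint_left]
    rintro x hx ⟨X, hX, hxX⟩
    exact hx (h2 X hX (Set.disjoint_empty X) hxX)
  · intro _
    obtain ⟨h1, h2⟩ := famA_aux (Y := T_K) hbip hF hK hdecap hSK hS
      (fun y hy x hx hxT he => hxT (hTK.mem (hsub hy) hx he))
    refine ⟨h1, ?_⟩
    rw [Set.disjoint_left]
    rintro x hx ⟨X, ⟨hX, hXT⟩, hxX⟩
    exact hx (h2 X hX hXT hxX)
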